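/- Let y ~ N(0, Id + λ x x^⊤) in R^d with |λ|·‖x‖² ≤ 1, and let H_α be the multivariate probabilists' Hermite polynomial indexed by a multi-index α over [d]. If |α| is odd then E[H_α(y)] = 0, and if |α| is even then E[H_α(y)] = (|α|−1)!! · λ^{|α|/2} · x^α, where x^α = ∏_i x_i^{α_i}. -/

import Mathlib

open MeasureTheory ProbabilityTheory

/-! The exponential generating series of the Hermite values `H_n(a)` is `exp(aT - T²/2)`. Taking
the product over the coordinates, rescaled by `v i`, collects all `H_α(y)` with `|α| = n` into the
`n`-th coefficient of `exp(⟨v, y⟩T - |v|²T²/2)`, which involves `y` only through the Gaussian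
variable `⟨v, y⟩`. If its variance is `σ²`, the expectation of that series is
`exp((σ² - |v|²)T²/2)`; here `σ² - |v|² = lam * ⟨v, x⟩²`, so the expectation is `exp(lam T²/2)`
rescaled by `⟨v, x⟩`. Both sides are polynomial in `v`, and comparing the coefficients of `v^α`
gives `E[H_α(y)]`. -/

section PowerSeries

open PowerSeries Finset
open scoped Nat

variable {ι K : Type*} [Field K] [CharZero K]

/-- The formal power series `exp(c T² / 2)`. For `c = σ²` it is the moment generating series of the
centred Gaussian of variance `σ²`, and for `c = -1` it is the factor turning `exp(aT)` into the
generating series of the Hermite polynomials. -/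
noncomputable def gaussianSeries (c : K) : K⟦X⟧ :=
  expand 2 two_ne_zero (rescale (c / 2) (exp K))

theorem coeff_gaussianSeries_two_mul (c : K) (k : ℕ) :
    coeff (2 * k) (gaussianSeries c) = (c / 2) ^ k / k ! := by
  simp [gaussianSeries, coeff_rescale, coeff_exp, div_eq_mul_inv]

theorem factorial_two_mul_eq_doubleFactorial (k : ℕ) :
    (2 * k)! = 2 ^ k * k ! * (2 * k - 1)‼ := by
  cases k with
  | zero => simp
  | succ k =>
    rw [← Nat.doubleFactorial_two_mul, show 2 * (k + 1) = 2 * k + 1 + 1 by ring,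
      Nat.factorial_eq_mul_doubleFactorial, Nat.add_sub_cancel]

theorem coeff_gaussianSeries (c : K) (n : ℕ) :
    coeff n (gaussianSeries c) = if Even n then (n - 1)‼ * c ^ (n / 2) / n ! else 0 := by
  split_ifs with h
  · obtain ⟨k, rfl⟩ := even_iff_exists_two_mul.mp h
    have : ((2 * k - 1)‼ : K) ≠ 0 := mod_cast (Nat.doubleFactorial_pos _).ne'
    rw [coeff_gaussianSeries_two_mul, factorial_two_mul_eq_doubleFactorial,
      Nat.mul_div_cancel_left k two_pos]
    push_cast
    rw [div_pow]
    field_simp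
  · exact coeff_expand_of_not_dvd 2 two_ne_zero _ (by rwa [← even_iff_two_dvd])

theorem rescale_gaussianSeries (a c : K) :
    rescale a (gaussianSeries c) = gaussianSeries (c * a ^ 2) := by
  ext n
  rw [coeff_rescale, coeff_gaussianSeries, coeff_gaussianSeries]
  split_ifs with h
  · rw [mul_pow, ← pow_mul, Nat.two_mul_div_two_of_even h]
    ring
  · exact mul_zero _

theorem gaussianSeries_zero : gaussianSeries (0 : K) = 1 := by
  simp [gaussianSeries]

theorem gaussianSeries_add (c d : K) :
    gaussianSeries (c + d) = gaussianSeries c * gaussianSeries d := by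
  rw [gaussianSeries, add_div, ← exp_mul_exp_eq_exp_add, map_mul]
  rfl

theorem gaussianSeries_sum (s : Finset ι) (c : ι → K) :
    gaussianSeries (∑ i ∈ s, c i) = ∏ i ∈ s, gaussianSeries (c i) := by
  classical
  induction s using Finset.induction_on with
  | empty => simp [gaussianSeries_zero]
  | insert i s hi ih => rw [sum_insert hi, prod_insert hi, gaussianSeries_add, ih]

theorem rescale_exp_sum {A : Type*} [CommRing A] [Algebra ℚ A] (s : Finset ι) (a : ι → A) :
    rescale (∑ i ∈ s, a i) (exp A) = ∏ i ∈ s, rescale (a i) (exp A) := by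
  classical
  induction s using Finset.induction_on with
  | empty => simp
  | insert i s hi ih => rw [sum_insert hi, prod_insert hi, ← exp_mul_exp_eq_exp_add, ih]

theorem coeff_prod_eq_sum_piAntidiag {R : Type*} [CommSemiring R] [DecidableEq ι]
    (s : Finset ι) (f : ι → R⟦X⟧) (n : ℕ) :
    coeff n (∏ i ∈ s, f i) = ∑ α ∈ piAntidiag s n, ∏ i ∈ s, coeff (α i) (f i) := by
  rw [coeff_prod]
  refine sum_bij (fun α _ ↦ α) (fun α hα ↦ ?_) (by simp) (fun α hα ↦ ?_) (by simp)
  · simpa [Finset.subset_iff] using hα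
  · refine ⟨Finsupp.onFinset s α (mem_piAntidiag.mp hα).2, ?_, rfl⟩
    exact mem_finsuppAntidiag.mpr ⟨(mem_piAntidiag.mp hα).1, Finsupp.support_onFinset_subset⟩

theorem coeff_rescale_exp (a : K) (n : ℕ) : coeff n (rescale a (exp K)) = a ^ n / n ! := by
  simp [coeff_rescale, coeff_exp, div_eq_mul_inv]

theorem sum_piAntidiag_prod_pow_div_factorial [DecidableEq ι] (s : Finset ι) (a : ι → K) (n : ℕ) :
    ∑ α ∈ piAntidiag s n, ∏ i ∈ s, a i ^ α i / (α i)! = (∑ i ∈ s, a i) ^ n / n ! := by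
  rw [← coeff_rescale_exp, rescale_exp_sum, coeff_prod_eq_sum_piAntidiag]
  simp only [coeff_rescale_exp]

theorem coeff_hermite_div_factorial {n k : ℕ} (h : k ≤ n) :
    ((Polynomial.hermite n).coeff k : K) / n ! =
      coeff (n - k) (gaussianSeries (-1 : K)) / k ! := by
  have heven : Even (n + k) ↔ Even (n - k) := by rw [Nat.even_add, Nat.even_sub h]
  simp only [Polynomial.coeff_hermite, coeff_gaussianSeries, heven]
  split_ifs
  · push_cast
    rw [Nat.cast_choose K h]
    have hn : (n ! : K) ≠ 0 := mod_cast n.factorial_ne_zero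
    field_simp
  · simp

theorem coeff_rescale_exp_mul_gaussianSeries_neg_one (a : K) (n : ℕ) :
    coeff n (rescale a (exp K) * gaussianSeries (-1)) =
      Polynomial.aeval a (Polynomial.hermite n) / n ! := by
  rw [coeff_mul, Nat.sum_antidiagonal_eq_sum_range_succ
      (fun k l ↦ coeff k (rescale a (exp K)) * coeff l (gaussianSeries (-1))),
    Polynomial.aeval_eq_sum_range, Polynomial.natDegree_hermite, sum_div]
  refine sum_congr rfl fun k hk ↦ ?_
  have hcoeff := coeff_hermite_div_factorial (K := K) (Nat.lt_succ_iff.mp (mem_range.mp hk))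
  rw [coeff_rescale_exp, zsmul_eq_mul]
  linear_combination -a ^ k * hcoeff

theorem sum_piAntidiag_prod_hermite [DecidableEq ι] (s : Finset ι) (v y : ι → K) (n : ℕ) :
    ∑ α ∈ piAntidiag s n,
        ∏ i ∈ s, v i ^ α i / (α i)! * Polynomial.aeval (y i) (Polynomial.hermite (α i)) =
      coeff n (rescale (∑ i ∈ s, v i * y i) (exp K) * gaussianSeries (-∑ i ∈ s, v i ^ 2)) := by
  have hfactor (i : ι) : rescale (v i * y i) (exp K) * gaussianSeries (-v i ^ 2) =
      rescale (v i) (rescale (y i) (exp K) * gaussianSeries (-1)) := by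
    rw [map_mul, rescale_rescale, rescale_gaussianSeries, mul_comm (y i), neg_one_mul]
  rw [rescale_exp_sum, ← sum_neg_distrib, gaussianSeries_sum, ← prod_mul_distrib,
    coeff_prod_eq_sum_piAntidiag]
  simp only [hfactor, coeff_rescale, coeff_rescale_exp_mul_gaussianSeries_neg_one]
  exact sum_congr rfl fun α _ ↦ prod_congr rfl fun i _ ↦ by ring

end PowerSeries

theorem eq_of_sum_mul_prod_pow_eq {ι R : Type*} [Fintype ι] [CommRing R] [IsDomain R] [Infinite R]
    {s : Finset (ι → ℕ)} {c d : (ι → ℕ) → R}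
    (h : ∀ v : ι → R, ∑ α ∈ s, c α * ∏ i, v i ^ α i = ∑ α ∈ s, d α * ∏ i, v i ^ α i)
    {α : ι → ℕ} (hα : α ∈ s) : c α = d α := by
  classical
  let toPoly (c : (ι → ℕ) → R) : MvPolynomial ι R :=
    ∑ α ∈ s, MvPolynomial.monomial (Finsupp.equivFunOnFinite.symm α) (c α)
  have coeff_toPoly (c : (ι → ℕ) → R) :
      (toPoly c).coeff (Finsupp.equivFunOnFinite.symm α) = c α := by
    simp [toPoly, MvPolynomial.coeff_sum, MvPolynomial.coeff_monomial, hα]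
  have toPoly_eq : toPoly c = toPoly d := MvPolynomial.funext fun v ↦ by
    simpa [toPoly, MvPolynomial.eval_monomial, Finsupp.prod_fintype] using h v
  rw [← coeff_toPoly c, toPoly_eq, coeff_toPoly]

section Moments

open scoped NNReal

variable {Ω : Type*} [MeasurableSpace Ω]

/-- The algebra of random variables all of whose moments are finite, through which the integrability
of polynomials in such variables is obtained. Functions are not identified almost everywhere. -/
def finiteMoments (μ : Measure Ω) [IsFiniteMeasure μ] : Subalgebra ℝ (Ω → ℝ) where
  carrier := {f | ∀ p : ℝ≥0, MemLp f p μ}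
  add_mem' hf hg p := (hf p).add (hg p)
  algebraMap_mem' r _ := memLp_const r
  mul_mem' {f g} hf hg p :=
    have : ENNReal.HolderTriple (2 * p : ℝ≥0) (2 * p : ℝ≥0) p := ⟨by
      rw [ENNReal.coe_mul, ENNReal.mul_inv (by simp) (by simp), ← add_mul]
      simp [ENNReal.inv_two_add_inv_two]⟩
    MemLp.mul (hg (2 * p)) (hf (2 * p))

variable {μ : Measure Ω} [IsFiniteMeasure μ]

theorem integrable_of_mem_finiteMoments {f : Ω → ℝ} (hf : f ∈ finiteMoments μ) :
    Integrable f μ :=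
  memLp_one_iff_integrable.mp (by simpa using hf 1)

theorem aeval_mem_finiteMoments {R : Type*} [CommRing R] [Algebra R ℝ] {f : Ω → ℝ}
    (hf : f ∈ finiteMoments μ) (p : Polynomial R) :
    (fun ω ↦ Polynomial.aeval (f ω) p) ∈ finiteMoments μ := by
  rw [← Polynomial.aeval_pi_apply, ← Polynomial.aeval_map_algebraMap ℝ]
  exact Algebra.adjoin_le (Set.singleton_subset_iff.mpr hf)
    (Polynomial.aeval_mem_adjoin_singleton ℝ f)

theorem mem_finiteMoments_of_map_eq_gaussianReal {f : Ω → ℝ} {m : ℝ} {s : ℝ≥0}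
    (hf : μ.map f = gaussianReal m s) : f ∈ finiteMoments μ := fun p ↦ by
  have hmeas : AEMeasurable f μ := aemeasurable_of_map_neZero (by rw [hf]; infer_instance)
  have hid := memLp_id_gaussianReal (μ := m) (v := s) p
  rwa [← hf, memLp_map_measure_iff (by fun_prop) hmeas] at hid

end Moments

section GaussianReal

open PowerSeries Finset
open scoped Nat NNReal

theorem hasSum_gaussianSeries (c t : ℝ) :
    HasSum (fun n ↦ t ^ n * coeff n (gaussianSeries c)) (Real.exp (c * t ^ 2 / 2)) := by
  have hexp : HasSum (fun k ↦ (c * t ^ 2 / 2) ^ k / k !) (Real.exp (c * t ^ 2 / 2)) := by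
    rw [Real.exp_eq_exp_ℝ]
    exact NormedSpace.expSeries_div_hasSum_exp _
  have hodd : ∀ n ∉ Set.range (2 * ·), t ^ n * coeff n (gaussianSeries c) = 0 := fun n hn ↦ by
    rw [coeff_gaussianSeries, if_neg, mul_zero]
    intro h
    exact hn ((even_iff_exists_two_mul.mp h).imp fun _ ↦ Eq.symm)
  rw [← (mul_right_injective₀ two_ne_zero).hasSum_iff hodd]
  convert! hexp using 2 with k
  rw [Function.comp_apply, coeff_gaussianSeries_two_mul, pow_mul]
  ring

theorem integral_pow_div_factorial_gaussianReal (s : ℝ≥0) (n : ℕ) :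
    (∫ z, z ^ n ∂gaussianReal 0 s) / n ! = coeff n (gaussianSeries (s : ℝ)) := by
  have hmgf := hasFPowerSeriesAt_mgf (X := fun z ↦ z) (μ := gaussianReal 0 s) (v := 0) (by simp)
  have hseries : HasFPowerSeriesAt (mgf (fun z ↦ z) (gaussianReal 0 s))
      (FormalMultilinearSeries.ofScalars ℝ fun n ↦ coeff n (gaussianSeries (s : ℝ))) 0 :=
    hasFPowerSeriesAt_iff.mpr <| .of_forall fun t ↦ by
      simpa [mgf_fun_id_gaussianReal, FormalMultilinearSeries.coeff_ofScalars] using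
        hasSum_gaussianSeries s t
  simpa [FormalMultilinearSeries.coeff_ofScalars] using
    congrArg (·.coeff n) (hmgf.eq_formalMultilinearSeries hseries)

theorem integral_coeff_rescale_exp_mul_gaussianReal (s : ℝ≥0) (F : ℝ⟦X⟧) (n : ℕ) :
    ∫ z, coeff n (rescale z (exp ℝ) * F) ∂gaussianReal 0 s =
      coeff n (gaussianSeries (s : ℝ) * F) := by
  have hint (k : ℕ) : Integrable (fun z ↦ z ^ k) (gaussianReal 0 s) :=
    integrable_of_mem_finiteMoments <|
      pow_mem (mem_finiteMoments_of_map_eq_gaussianReal Measure.map_id) k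
  simp only [coeff_mul, coeff_rescale_exp]
  rw [integral_finsetSum _ fun kl _ ↦ ((hint kl.1).div_const _).mul_const _]
  simp only [integral_mul_const, integral_div, integral_pow_div_factorial_gaussianReal]

variable {ι Ω : Type*} [Fintype ι] [MeasurableSpace Ω] {P : Measure Ω} [IsFiniteMeasure P]
  {y : Ω → ι → ℝ}

theorem integrable_prod_aeval {R : Type*} [CommRing R] [Algebra R ℝ]
    (hy : ∀ i, (y · i) ∈ finiteMoments P) (p : ι → Polynomial R) :
    Integrable (fun ω ↦ ∏ i, Polynomial.aeval (y ω i) (p i)) P := by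
  have hprod := prod_mem (t := univ) fun i _ ↦ aeval_mem_finiteMoments (hy i) (p i)
  rw [prod_fn] at hprod
  exact integrable_of_mem_finiteMoments hprod

theorem sum_piAntidiag_integral_prod_hermite [DecidableEq ι]
    (hy : ∀ i, (y · i) ∈ finiteMoments P) {v : ι → ℝ} {s : ℝ≥0}
    (hv : P.map (fun ω ↦ ∑ i, v i * y ω i) = gaussianReal 0 s) (n : ℕ) :
    ∑ α ∈ piAntidiag univ n, (∏ i, v i ^ α i / (α i)!) *
        ∫ ω, ∏ i, Polynomial.aeval (y ω i) (Polynomial.hermite (α i)) ∂P =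
      coeff n (gaussianSeries (s - ∑ i, v i ^ 2)) := by
  have hmeas : AEMeasurable (fun ω ↦ ∑ i, v i * y ω i) P :=
    aemeasurable_of_map_neZero (by rw [hv]; infer_instance)
  have hcont (F : ℝ⟦X⟧) : Continuous fun z ↦ coeff n (rescale z (exp ℝ) * F) := by
    simp only [coeff_mul, coeff_rescale]
    fun_prop
  simp only [← integral_const_mul, ← prod_mul_distrib]
  rw [← integral_finsetSum]
  · simp only [sum_piAntidiag_prod_hermite]
    rw [← integral_map (f := fun z ↦ coeff n (rescale z (exp ℝ) * gaussianSeries _)) hmeas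
      (hcont _).aestronglyMeasurable, hv, integral_coeff_rescale_exp_mul_gaussianReal,
      ← gaussianSeries_add, sub_eq_add_neg]
  · intro α _
    simp only [prod_mul_distrib]
    exact (integrable_prod_aeval hy _).const_mul _

end GaussianReal

section Spiked

open PowerSeries Finset
open scoped Nat

variable {ι : Type*} [Fintype ι]

theorem sum_sq_add_mul_sum_mul_sq_nonneg {x : ι → ℝ} {lam : ℝ} (hx : -1 ≤ lam * ∑ i, x i ^ 2)
    (v : ι → ℝ) : 0 ≤ ∑ i, v i ^ 2 + lam * (∑ i, v i * x i) ^ 2 := by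
  have hv : 0 ≤ ∑ i, v i ^ 2 := sum_nonneg fun i _ ↦ sq_nonneg (v i)
  rcases le_total 0 lam with hlam | hlam
  · positivity
  · have hcs := mul_le_mul_of_nonpos_left (sum_mul_sq_le_sq_mul_sq univ v x) hlam
    have hbound := mul_le_mul_of_nonneg_left hx hv
    linarith

variable {Ω : Type*} [MeasurableSpace Ω] {P : Measure Ω} [IsFiniteMeasure P]
  {y : Ω → ι → ℝ}

theorem integral_prod_hermite_eq_coeff_gaussianSeries {x : ι → ℝ} {lam : ℝ}
    (hx : -1 ≤ lam * ∑ i, x i ^ 2)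
    (hy : ∀ v : ι → ℝ, P.map (fun ω ↦ ∑ i, v i * y ω i) =
      gaussianReal 0 (∑ i, v i ^ 2 + lam * (∑ i, v i * x i) ^ 2).toNNReal) (α : ι → ℕ) :
    ∫ ω, ∏ i, Polynomial.aeval (y ω i) (Polynomial.hermite (α i)) ∂P =
      (∑ i, α i)! * coeff (∑ i, α i) (gaussianSeries lam) * ∏ i, x i ^ α i := by
  classical
  set n := ∑ i, α i
  have hmoments (i : ι) : (y · i) ∈ finiteMoments P :=
    mem_finiteMoments_of_map_eq_gaussianReal (by simpa [Pi.single_apply] using hy (Pi.single i 1))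
  have hgen (v : ι → ℝ) :
      ∑ β ∈ piAntidiag univ n, (∏ i, v i ^ β i / (β i)!) *
          ∫ ω, ∏ i, Polynomial.aeval (y ω i) (Polynomial.hermite (β i)) ∂P =
        ∑ β ∈ piAntidiag univ n, (∏ i, (v i * x i) ^ β i / (β i)!) *
          (n ! * coeff n (gaussianSeries lam)) := by
    rw [sum_piAntidiag_integral_prod_hermite hmoments (hy v),
      Real.coe_toNNReal _ (sum_sq_add_mul_sum_mul_sq_nonneg hx v), add_sub_cancel_left,
      ← rescale_gaussianSeries, coeff_rescale, ← sum_mul, sum_piAntidiag_prod_pow_div_factorial]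
    field_simp
  have hcoeff := eq_of_sum_mul_prod_pow_eq (α := α) (s := piAntidiag univ n)
    (c := fun β ↦ (∏ i, ((β i)! : ℝ))⁻¹ *
      ∫ ω, ∏ i, Polynomial.aeval (y ω i) (Polynomial.hermite (β i)) ∂P)
    (d := fun β ↦ (∏ i, ((β i)! : ℝ))⁻¹ * (n ! * coeff n (gaussianSeries lam) * ∏ i, x i ^ β i))
    (fun v ↦ by
      convert! hgen v using 2 with β _ β _ <;>
      · simp only [prod_div_distrib, mul_pow, prod_mul_distrib]
        ring) (by simp [n])
  exact mul_left_cancel₀ (inv_ne_zero (prod_ne_zero_iff.mpr fun i _ ↦ by positivity)) hcoeff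

theorem stmt6_general {x : ι → ℝ} {lam : ℝ} (hx : -1 ≤ lam * ∑ i, x i ^ 2)
    (hy : ∀ v : ι → ℝ, P.map (fun ω ↦ ∑ i, v i * y ω i) =
      gaussianReal 0 (∑ i, v i ^ 2 + lam * (∑ i, v i * x i) ^ 2).toNNReal) (α : ι → ℕ) :
    (Odd (∑ i, α i) →
      ∫ ω, ∏ i, Polynomial.aeval (y ω i) (Polynomial.hermite (α i)) ∂P = 0) ∧
    (Even (∑ i, α i) →
      ∫ ω, ∏ i, Polynomial.aeval (y ω i) (Polynomial.hermite (α i)) ∂P =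
        (∑ i, α i - 1)‼ * lam ^ ((∑ i, α i) / 2) * ∏ i, x i ^ α i) := by
  rw [integral_prod_hermite_eq_coeff_gaussianSeries hx hy, coeff_gaussianSeries]
  refine ⟨fun hodd ↦ ?_, fun heven ↦ ?_⟩
  · simp [Nat.not_even_iff_odd.mpr hodd]
  · rw [if_pos heven]
    field_simp

end Spiked

/-- Hermite moments of a spiked Gaussian: if `y ~ N(0, Id + λ x xᵀ)` with `|λ|‖x‖² ≤ 1`,
then `E[H_α(y)] = 0` for `|α|` odd, and `E[H_α(y)] = (|α|−1)‼ λ^{|α|/2} x^α` for `|α|` even,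
where `H_α(y) = ∏ᵢ H_{αᵢ}(yᵢ)` is a product of probabilists' Hermite polynomials. -/
theorem stmt6 {Ω : Type*} [MeasurableSpace Ω] (P : Measure Ω) [IsProbabilityMeasure P]
    {d : ℕ} (x : Fin d → ℝ) (lam : ℝ) (hx : |lam| * ∑ i, x i ^ 2 ≤ 1)
    (y : Ω → Fin d → ℝ)
    (hy : ∀ v : Fin d → ℝ,
      Measure.map (fun ω => ∑ i, v i * y ω i) P =
        gaussianReal 0 (Real.toNNReal (∑ i, v i ^ 2 + lam * (∑ i, v i * x i) ^ 2)))
    (α : Fin d → ℕ) :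
    (Odd (∑ i, α i) →
      ∫ ω, ∏ i, Polynomial.aeval (y ω i) (Polynomial.hermite (α i)) ∂P = 0) ∧
    (Even (∑ i, α i) →
      ∫ ω, ∏ i, Polynomial.aeval (y ω i) (Polynomial.hermite (α i)) ∂P =
        (Nat.doubleFactorial (∑ i, α i - 1) : ℝ) * lam ^ ((∑ i, α i) / 2) *
          ∏ i, x i ^ α i) := by
  have hsq : |lam * ∑ i, x i ^ 2| ≤ 1 := by
    rwa [abs_mul, abs_of_nonneg (Finset.sum_nonneg fun i _ ↦ sq_nonneg (x i))]
  exact stmt6_general (neg_le_of_abs_le hsq) hy α
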